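/- Let p > 3 be prime and let ā, b̄ ∈ F_p with ā ≠ 0 and b̄ ≠ 0. Set D̄ = −4ā³ − 27b̄² and define u : ℕ → F_p by u(1) = 0, u(2) = −ā, u(3) = b̄, u(n+3) = b̄·u(n) − ā·u(n+1). Then the number of roots of x³ + āx = b̄ in F_p, counted with multiplicity (as roots of the polynomial X³ + āX − b̄ over F_p), equals 3 if D̄·u(p−2)² = 0; equals 0 if D̄·u(p−2)² = 9·ā²; and equals 1 if D̄·u(p−2)² ∉ {0, 9·ā²}. -/

import Mathlib

/-!
Let `x, y, z` be the roots of `X³ + aX - b` in an algebraic closure of a field with `q` elements.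
For `n ≥ 1` the sequence `u n` is the complete homogeneous symmetric polynomial of degree `n` in
`x, y, z`, a quotient of alternants, so `D * u (q - 2) ^ 2` is the square of
`x ^ q * (y - z) + y ^ q * (z - x) + z ^ q * (x - y)` (at `q = 2`, with `1` in place of `u 0`).
The number of rational roots is the number of fixed points of the permutation `w ↦ w ^ q` of the
roots, and this square tells the possible permutations apart: it is `0` for the identity, `9a²` for
a 3-cycle, and for the transposition of `y` and `z` it is `9x²(y - z)²`, which differs from `9a²` by
`-9yz(x - y)(x - z)`.
-/

open scoped Classical
open Polynomial

/-- The sequence `u : ℕ → F_p` with `u 1 = 0`, `u 2 = -A`, `u 3 = B`,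
`u (n+3) = B * u n - A * u (n+1)`. -/
def useq {p : ℕ} (A B : ZMod p) : ℕ → ZMod p
  | 0 => 0
  | 1 => 0
  | 2 => -A
  | 3 => B
  | n + 4 => B * useq A B (n + 1) - A * useq A B (n + 2)

section Identities

variable {R S : Type*} [CommRing R] [CommRing S]

/-- The complete homogeneous symmetric polynomial of degree `n` in the three roots of
`X³ + aX - b`, through its recurrence. It extends `useq`, from which it differs only at `n = 0`,
to arbitrary rings; the value `1` there is what the recurrence at `n = 3` requires. -/
def cubicHsymm (a b : R) : ℕ → R
  | 0 => 1
  | 1 => 0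
  | 2 => -a
  | n + 3 => b * cubicHsymm a b n - a * cubicHsymm a b (n + 1)

theorem map_cubicHsymm (f : R →+* S) (a b : R) (n : ℕ) :
    f (cubicHsymm a b n) = cubicHsymm (f a) (f b) n := by
  induction n using cubicHsymm.induct with
  | case1 | case2 | case3 => simp [cubicHsymm]
  | case4 n ih ih' => simp only [cubicHsymm, map_sub, map_mul, ih, ih']

theorem cubicHsymm_mul_vandermonde {x y z : R} (h : x + y + z = 0) (n : ℕ) :
    cubicHsymm (x * y + x * z + y * z) (x * y * z) n * ((x - y) * (x - z) * (y - z)) =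
      x ^ (n + 2) * (y - z) + y ^ (n + 2) * (z - x) + z ^ (n + 2) * (x - y) := by
  obtain rfl : z = -x - y := by linear_combination h
  induction n using cubicHsymm.induct with
  | case1 | case2 | case3 => simp only [cubicHsymm]; ring
  | case4 n ih ih' =>
    simp only [cubicHsymm, Nat.succ_eq_add_one]
    linear_combination x * y * (-x - y) * ih - (x * y + x * (-x - y) + y * (-x - y)) * ih'

theorem alternating_sum_sq_of_cycle {x y z : R} (h : x + y + z = 0) :
    (y * (y - z) + z * (z - x) + x * (x - y)) ^ 2 = 9 * (x * y + x * z + y * z) ^ 2 := by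
  obtain rfl : z = -x - y := by linear_combination h
  ring

theorem alternating_sum_sq_ne_of_swap {K : Type*} [Field K] (h3 : (3 : K) ≠ 0) {x y z : K}
    (h : x + y + z = 0) (hxyz : x * y * z ≠ 0) (hxy : x ≠ y) (hxz : x ≠ z) (hyz : y ≠ z) :
    (x * (y - z) + z * (z - x) + y * (x - y)) ^ 2 ≠ 0 ∧
      (x * (y - z) + z * (z - x) + y * (x - y)) ^ 2 ≠ 9 * (x * y + x * z + y * z) ^ 2 := by
  have hx : x ≠ 0 := left_ne_zero_of_mul (left_ne_zero_of_mul hxyz)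
  have hyz0 : y * z ≠ 0 := right_ne_zero_of_mul (mul_assoc x y z ▸ hxyz)
  have hz : z = -x - y := by linear_combination h
  constructor
  · have hsq : (x * (y - z) + z * (z - x) + y * (x - y)) ^ 2 = (3 * x * (y - z)) ^ 2 := by
      rw [hz]; ring
    rw [hsq]
    exact pow_ne_zero 2 (mul_ne_zero (mul_ne_zero h3 hx) (sub_ne_zero.2 hyz))
  · have hsub : (x * (y - z) + z * (z - x) + y * (x - y)) ^ 2 -
        9 * (x * y + x * z + y * z) ^ 2 = -3 ^ 2 * (y * z) * ((x - y) * (x - z)) := by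
      rw [hz]; ring
    rw [← sub_ne_zero, hsub]
    exact mul_ne_zero (mul_ne_zero (neg_ne_zero.2 (pow_ne_zero 2 h3)) hyz0)
      (mul_ne_zero (sub_ne_zero.2 hxy) (sub_ne_zero.2 hxz))

end Identities

theorem useq_eq_cubicHsymm {p : ℕ} (a b : ZMod p) {n : ℕ} (hn : n ≠ 0) :
    useq a b n = cubicHsymm a b n := by
  induction n using useq.induct with
  | case1 => exact absurd rfl hn
  | case2 | case3 | case4 => simp [useq, cubicHsymm]
  | case5 n ih ih' => rw [useq, cubicHsymm, ih n.succ_ne_zero, ih' (n + 1).succ_ne_zero]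

theorem eq_perm_of_triple_eq {α : Type*} {u v w x y z : α}
    (h : ({u, v, w} : Multiset α) = {x, y, z}) :
    (u = x ∧ v = y ∧ w = z) ∨ (u = x ∧ v = z ∧ w = y) ∨ (u = y ∧ v = x ∧ w = z) ∨
      (u = y ∧ v = z ∧ w = x) ∨ (u = z ∧ v = x ∧ w = y) ∨ (u = z ∧ v = y ∧ w = x) := by
  have hu := congrArg (Multiset.count u) h
  have hv := congrArg (Multiset.count v) h
  have hw := congrArg (Multiset.count w) h
  simp only [Multiset.insert_eq_cons, Multiset.count_cons, Multiset.count_singleton] at hu hv hw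
  grind

theorem exists_eq_triple_of_map_eq_self {α : Type*} {s : Multiset α} {φ : α → α}
    (hs : s.card = 3) (hφ : s.map φ = s) :
    ∃ x y z, s = {x, y, z} ∧
      ((φ x = x ∧ φ y = y ∧ φ z = z) ∨
        (φ x = x ∧ φ y = z ∧ φ z = y ∧ y ≠ z) ∨
        (φ x = y ∧ φ y = z ∧ φ z = x ∧ x ≠ y ∧ y ≠ z ∧ z ≠ x)) := by
  obtain ⟨x, y, z, rfl⟩ := Multiset.card_eq_three.1 hs
  have hyxz : ({x, y, z} : Multiset α) = {y, x, z} := Multiset.cons_swap x y {z}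
  have hxzy : ({x, y, z} : Multiset α) = {x, z, y} := congrArg (x ::ₘ ·) (Multiset.pair_comm y z)
  have hzxy : ({x, y, z} : Multiset α) = {z, x, y} := hxzy.trans (Multiset.cons_swap x z {y})
  -- A transposition of equal elements, or a 3-cycle of elements not all distinct, fixes all three.
  rcases eq_perm_of_triple_eq hφ with hid | hx | hz | hxyz | hxzy' | hy
  · exact ⟨x, y, z, rfl, .inl hid⟩
  · exact ⟨x, y, z, rfl, by grind⟩
  · exact ⟨z, x, y, hzxy, by grind⟩
  · exact ⟨x, y, z, rfl, by grind⟩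
  · exact ⟨x, z, y, hxzy, by grind⟩
  · exact ⟨y, x, z, hyxz, by grind⟩

section DepressedCubic

/-- The cubic `X³ + aX - b`. -/
def depressedCubic {R : Type*} [Ring R] (a b : R) : Cubic R := ⟨1, 0, a, -b⟩

theorem toPoly_depressedCubic {R : Type*} [Ring R] (a b : R) :
    (depressedCubic a b).toPoly = X ^ 3 + C a * X - C b := by
  simp [depressedCubic, Cubic.toPoly, sub_eq_add_neg]

variable {F K : Type*} [Field F] [Field K]

theorem depressedCubic_vieta (f : F →+* K) {a b : F} {x y z : K}
    (h : ((depressedCubic a b).map f).roots = {x, y, z}) :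
    x + y + z = 0 ∧ f a = x * y + x * z + y * z ∧ f b = x * y * z := by
  have ha : (depressedCubic a b).a ≠ 0 := one_ne_zero
  refine ⟨?_, ?_, ?_⟩
  · simpa only [depressedCubic, map_zero, map_one, one_mul, zero_eq_neg] using
      Cubic.b_eq_three_roots ha h
  · simpa [depressedCubic] using Cubic.c_eq_three_roots ha h
  · simpa [depressedCubic] using Cubic.d_eq_three_roots ha h

theorem map_discr_mul_cubicHsymm_sq (f : F →+* K) {a b : F} {x y z : K}
    (h : ((depressedCubic a b).map f).roots = {x, y, z}) (n : ℕ) :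
    f ((-4 * a ^ 3 - 27 * b ^ 2) * cubicHsymm a b n ^ 2) =
      (x ^ (n + 2) * (y - z) + y ^ (n + 2) * (z - x) + z ^ (n + 2) * (x - y)) ^ 2 := by
  obtain ⟨hsum, ha, hb⟩ := depressedCubic_vieta f h
  have hdiscr : f (-4 * a ^ 3 - 27 * b ^ 2) = ((x - y) * (x - z) * (y - z)) ^ 2 := by
    simpa [Cubic.discr, depressedCubic] using Cubic.discr_eq_prod_three_roots one_ne_zero h
  rw [map_mul, map_pow, hdiscr, map_cubicHsymm, ha, hb, ← mul_pow, mul_comm,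
    cubicHsymm_mul_vandermonde hsum]

end DepressedCubic

section Roots

theorem map_roots_eq_filter_range {A B : Type*} [CommRing A] [IsDomain A] [CommRing B] [IsDomain B]
    {f : A →+* B} (hf : Function.Injective f) (P : A[X]) :
    P.roots.map f = (P.map f).roots.filter (· ∈ Set.range f) := by
  ext w
  rw [Multiset.count_filter]
  split_ifs with hw
  · obtain ⟨t, rfl⟩ := hw
    rw [Multiset.count_map_eq_count' f _ hf, count_roots, count_roots, eq_rootMultiplicity_map hf]
  · refine Multiset.count_eq_zero.2 fun hmem => hw ?_
    obtain ⟨t, -, rfl⟩ := Multiset.mem_map.1 hmem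
    exact ⟨t, rfl⟩

theorem map_aroots_eq_self {F K : Type*} [Field F] [Field K] [Algebra F K] (φ : K →ₐ[F] K)
    {P : F[X]} (hP : (P.map (algebraMap F K)).Splits) : (P.aroots K).map φ = P.aroots K := by
  have h := hP.roots_map (φ : K →+* K)
  rw [Polynomial.map_map, AlgHom.comp_algebraMap] at h
  exact h.symm

variable {F K : Type*} [Field F] [Fintype F] [Field K] [Algebra F K]

theorem mem_range_algebraMap_iff_pow_card_eq_self {w : K} :
    w ∈ Set.range (algebraMap F K) ↔ w ^ Fintype.card F = w := by
  constructor
  · rintro ⟨t, rfl⟩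
    rw [← map_pow, FiniteField.pow_card]
  · intro hw
    have hsplits : (X ^ Fintype.card F - X : F[X]).Splits := by
      simpa using (FiniteField.isSplittingField_sub F F).splits
    have hne := FiniteField.X_pow_card_sub_X_ne_zero F (Fintype.one_lt_card (α := F))
    exact hsplits.mem_range_of_isRoot hne (by simp [hw])

theorem card_roots_eq_card_filter_pow_card (P : F[X]) :
    P.roots.card = ((P.aroots K).filter fun w => w ^ Fintype.card F = w).card := by
  rw [← Multiset.card_map (algebraMap F K), map_roots_eq_filter_range (algebraMap F K).injective]
  simp only [mem_range_algebraMap_iff_pow_card_eq_self, aroots]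

end Roots

section FiniteField

variable {F : Type*} [Field F] [Fintype F] {a b Δ : F}

theorem exists_roots_pow_card_cases {K : Type*} [Field K] [Algebra F K]
    (hsplits : ((depressedCubic a b).toPoly.map (algebraMap F K)).Splits) :
    ∃ x y z : K, ((depressedCubic a b).map (algebraMap F K)).roots = {x, y, z} ∧
      ((x ^ Fintype.card F = x ∧ y ^ Fintype.card F = y ∧ z ^ Fintype.card F = z) ∨
        (x ^ Fintype.card F = x ∧ y ^ Fintype.card F = z ∧ z ^ Fintype.card F = y ∧ y ≠ z) ∨
        (x ^ Fintype.card F = y ∧ y ^ Fintype.card F = z ∧ z ^ Fintype.card F = x ∧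
          x ≠ y ∧ y ≠ z ∧ z ≠ x)) := by
  refine exists_eq_triple_of_map_eq_self (φ := (· ^ Fintype.card F))
    ((Cubic.splits_iff_card_roots one_ne_zero).1 hsplits) ?_
  rw [Cubic.map_roots]
  exact map_aroots_eq_self (FiniteField.frobeniusAlgHom F K) hsplits

theorem algebraMap_discr_mul_cubicHsymm_card_sub_two_sq {K : Type*} [Field K] [Algebra F K]
    {x y z : K}
    (hroots : ((depressedCubic a b).map (algebraMap F K)).roots = {x, y, z})
    (hΔ : Δ = (-4 * a ^ 3 - 27 * b ^ 2) * cubicHsymm a b (Fintype.card F - 2) ^ 2) :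
    algebraMap F K Δ = (x ^ Fintype.card F * (y - z) + y ^ Fintype.card F * (z - x) +
      z ^ Fintype.card F * (x - y)) ^ 2 := by
  have hcard : Fintype.card F - 2 + 2 = Fintype.card F :=
    Nat.sub_add_cancel (Fintype.one_lt_card (α := F))
  simpa only [hcard, ← hΔ] using
    map_discr_mul_cubicHsymm_sq (algebraMap F K) hroots (Fintype.card F - 2)

theorem card_roots_depressedCubic_trichotomy (h3 : (3 : F) ≠ 0) (hb : b ≠ 0)
    (hΔ : Δ = (-4 * a ^ 3 - 27 * b ^ 2) * cubicHsymm a b (Fintype.card F - 2) ^ 2) :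
    ((depressedCubic a b).toPoly.roots.card = 3 ∧ Δ = 0) ∨
      ((depressedCubic a b).toPoly.roots.card = 0 ∧ Δ = 9 * a ^ 2) ∨
      ((depressedCubic a b).toPoly.roots.card = 1 ∧ Δ ≠ 0 ∧ Δ ≠ 9 * a ^ 2) := by
  let i := algebraMap F (AlgebraicClosure F)
  obtain ⟨x, y, z, hroots, hcases⟩ := exists_roots_pow_card_cases
    (IsAlgClosed.splits ((depressedCubic a b).toPoly.map i))
  have hi : Function.Injective i := i.injective
  obtain ⟨hsum, hia, hib⟩ := depressedCubic_vieta i hroots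
  have hiΔ : i Δ = _ := algebraMap_discr_mul_cubicHsymm_card_sub_two_sq hroots hΔ
  have hi9a : i (9 * a ^ 2) = 9 * (x * y + x * z + y * z) ^ 2 := by
    rw [map_mul, map_pow, map_ofNat, hia]
  rw [card_roots_eq_card_filter_pow_card (K := AlgebraicClosure F), aroots, ← Cubic.map_roots,
    hroots]
  simp only [Multiset.insert_eq_cons, Multiset.filter_cons, Multiset.filter_singleton]
  rcases hcases with ⟨hx, hy, hz⟩ | ⟨hx, hy, hz, hyz⟩ | ⟨hx, hy, hz, hxy, hyz, hzx⟩
  all_goals rw [hx, hy, hz] at hiΔ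
  · refine .inl ⟨by simp [hx, hy, hz], hi ?_⟩
    rw [hiΔ, map_zero]
    ring
  · refine .inr <| .inr ⟨by simp [hx, hy, hz, hyz, hyz.symm], ?_⟩
    have hi3 : (3 : AlgebraicClosure F) ≠ 0 := by
      rw [← map_ofNat i 3]
      exact (map_ne_zero i).2 h3
    have hxyz : x * y * z ≠ 0 := hib ▸ (map_ne_zero i).2 hb
    have hxy : x ≠ y := fun h => hyz (by rw [← hy, ← h, hx])
    have hxz : x ≠ z := fun h => hyz (by rw [← hz, ← h, hx])
    rw [← map_ne_zero i, ← hi.ne_iff, hiΔ, hi9a]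
    exact alternating_sum_sq_ne_of_swap hi3 hsum hxyz hxy hxz hyz
  · refine .inr <| .inl ⟨by simp [hx, hy, hz, hxy.symm, hyz.symm, hzx.symm], hi ?_⟩
    rw [hiΔ, hi9a, alternating_sum_sq_of_cycle hsum]

end FiniteField

theorem card_roots_cubic_zmod_general {F : Type*} [Field F] [Fintype F] {a b Δ : F}
    (h3 : (3 : F) ≠ 0) (ha : a ≠ 0) (hb : b ≠ 0)
    (hΔ : Δ = (-4 * a ^ 3 - 27 * b ^ 2) * cubicHsymm a b (Fintype.card F - 2) ^ 2) :
    (Δ = 0 → (X ^ 3 + C a * X - C b : F[X]).roots.card = 3) ∧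
      (Δ = 9 * a ^ 2 → (X ^ 3 + C a * X - C b : F[X]).roots.card = 0) ∧
      (Δ ≠ 0 ∧ Δ ≠ 9 * a ^ 2 → (X ^ 3 + C a * X - C b : F[X]).roots.card = 1) := by
  have h9a : 9 * a ^ 2 ≠ 0 := by
    rw [show (9 : F) = 3 ^ 2 by norm_num]
    exact mul_ne_zero (pow_ne_zero 2 h3) (pow_ne_zero 2 ha)
  have htrichotomy := card_roots_depressedCubic_trichotomy h3 hb hΔ
  rw [toPoly_depressedCubic] at htrichotomy
  grind

/-- the number of roots (with multiplicity) of `x³ + āx = b̄` in `F_p`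
for `p > 3` and `ā, b̄ ≠ 0`. -/
theorem card_roots_cubic_zmod (p : ℕ) [Fact p.Prime] (hp : 3 < p)
    (abar bbar : ZMod p) (ha : abar ≠ 0) (hb : bbar ≠ 0)
    (Dbar : ZMod p) (hD : Dbar = -4 * abar ^ 3 - 27 * bbar ^ 2)
    (N : ℕ)
    (hN : N = Multiset.card ((X ^ 3 + C abar * X - C bbar : Polynomial (ZMod p)).roots)) :
    (Dbar * useq abar bbar (p - 2) ^ 2 = 0 → N = 3) ∧
    (Dbar * useq abar bbar (p - 2) ^ 2 = 9 * abar ^ 2 → N = 0) ∧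
    (Dbar * useq abar bbar (p - 2) ^ 2 ≠ 0 ∧
      Dbar * useq abar bbar (p - 2) ^ 2 ≠ 9 * abar ^ 2 → N = 1) := by
  subst hN hD
  rw [useq_eq_cubicHsymm abar bbar (Nat.sub_ne_zero_of_lt (by lia))]
  have h3 : (3 : ZMod p) ≠ 0 := CharP.cast_ne_zero_of_ne_of_prime _ Nat.prime_three hp.ne'
  exact card_roots_cubic_zmod_general h3 ha hb (by rw [ZMod.card])
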